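/- If t_1,…,t_N are strictly positive real numbers, then M_{j,k}(A(t)) > 0 for all integers 1 ≤ j ≤ k ≤ n−1. -/

import Mathlib

noncomputable section

open Matrix

/-- `N = n(n-1)/2`, the number of parameters. -/
def Npar (n : ℕ) : ℕ := n * (n - 1) / 2

/-- The decreasing run `a, a-1, …, b` (empty if `b > a`). -/
def decRun (a b : ℕ) : List ℕ := (List.range' b (a + 1 - b)).reverse

/-- The index sequence `(i_1, …, i_N)`: for `m = 1, …, ⌊n/2⌋` (here `m` is 0-based, so
`m+1` is the 1-based block index), concatenate `n`, the run `n-2, …, 2(m+1)-1`, and the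
run `n-1, …, 2(m+1)`. -/
def wordD (n : ℕ) : List ℕ :=
  ((List.range (n / 2)).map (fun m =>
    n :: (decRun (n - 2) (2 * m + 1) ++ decRun (n - 1) (2 * m + 2)))).flatten

/-- The matrix `x_i(t)` (index `i` is 1-based, matrix positions are 1-based in the paper,
0-based here). -/
def xMat (n : ℕ) (i : ℕ) (t : ℝ) : Matrix (Fin (2 * n)) (Fin (2 * n)) ℝ :=
  Matrix.of fun p q =>
    (if (p : ℕ) = (q : ℕ) then 1 else 0) +
    (if i < n then
        (if (p : ℕ) + 1 = i ∧ (q : ℕ) + 1 = i + 1 then t else 0)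
      + (if (p : ℕ) + 1 = n + i + 1 ∧ (q : ℕ) + 1 = n + i then -t else 0)
     else
        (if (p : ℕ) + 1 = n - 1 ∧ (q : ℕ) + 1 = 2 * n then t else 0)
      + (if (p : ℕ) + 1 = n ∧ (q : ℕ) + 1 = 2 * n - 1 then -t else 0))

/-- The product `x_{i_1}(t_1) ⋯ x_{i_N}(t_N)`; the parameter `t l` plays the role of
`t_{l+1}`. -/
def prodX (n : ℕ) (t : ℕ → ℝ) : Matrix (Fin (2 * n)) (Fin (2 * n)) ℝ :=
  ((List.range (Npar n)).map (fun l => xMat n ((wordD n).getD l 0) (t l))).prod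

/-- The first block `X₁(t)` of the first `n` rows of the product. -/
def X1 (n : ℕ) (t : ℕ → ℝ) : Matrix (Fin n) (Fin n) ℝ :=
  Matrix.of fun p q =>
    prodX n t ⟨(p : ℕ), by have := p.isLt; omega⟩ ⟨(q : ℕ), by have := q.isLt; omega⟩

/-- The second block `X₂(t)` of the first `n` rows of the product. -/
def X2 (n : ℕ) (t : ℕ → ℝ) : Matrix (Fin n) (Fin n) ℝ :=
  Matrix.of fun p q =>
    prodX n t ⟨(p : ℕ), by have := p.isLt; omega⟩ ⟨n + (q : ℕ), by have := q.isLt; omega⟩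

/-- The skew-symmetric matrix `A(t) = X₁(t)⁻¹ · X₂(t)`. -/
def Amat (n : ℕ) (t : ℕ → ℝ) : Matrix (Fin n) (Fin n) ℝ := (X1 n t)⁻¹ * X2 n t

/-- The set `S_n^{>0}` of totally positive skew-symmetric matrices. -/
def Spos (n : ℕ) : Set (Matrix (Fin n) (Fin n) ℝ) :=
  { A | ∃ t : ℕ → ℝ, (∀ i < Npar n, 0 < t i) ∧ A = Amat n t }

/-- The signed minor `M_{j,k}(A)`: `(-1)^{jk}` times the determinant of the submatrix of `A`
with (1-based) rows `{1,…,n-k-1} ∪ {n-k+j,…,n}` and columns `{1,…,n-j}`. -/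
def Mminor (n j k : ℕ) (A : Matrix (Fin n) (Fin n) ℝ) : ℝ :=
  (-1 : ℝ) ^ (j * k) *
    Matrix.det (Matrix.of fun (p q : Fin (n - j)) =>
      A (if (p : ℕ) < n - k - 1
          then ⟨(p : ℕ), by have := p.isLt; omega⟩
          else ⟨(p : ℕ) + j, by have := p.isLt; omega⟩)
        ⟨(q : ℕ), by have := q.isLt; omega⟩)

/-- The Pfaffian of an `m × m` matrix (intended for `m` even):
`Pf(B) = (1/(2^{m/2} (m/2)!)) Σ_σ sgn(σ) Π_i B_{σ(2i-1), σ(2i)}`. -/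
def Pfaff {m : ℕ} (B : Matrix (Fin m) (Fin m) ℝ) : ℝ :=
  (1 / ((2 : ℝ) ^ (m / 2) * (Nat.factorial (m / 2) : ℝ))) *
    ∑ σ : Equiv.Perm (Fin m), ((Equiv.Perm.sign σ : ℤ) : ℝ) *
      ∏ i : Fin (m / 2),
        B (σ ⟨2 * (i : ℕ), by have := i.isLt; omega⟩)
          (σ ⟨2 * (i : ℕ) + 1, by have := i.isLt; omega⟩)

/-- `Pf_I(A)`: the Pfaffian of the submatrix of `A` with rows and columns indexed by `I`
in increasing order. -/
def PfI {n : ℕ} (A : Matrix (Fin n) (Fin n) ℝ) (I : Finset (Fin n)) : ℝ :=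
  Pfaff (Matrix.of fun (p q : Fin I.card) =>
    A ((I.orderIsoOfFin rfl p : Fin n)) ((I.orderIsoOfFin rfl q : Fin n)))

/-- `sgn(I,[n]) = (-1)^{(Σ_{i∈I} i) - |I|(|I|+1)/2}` (the elements of `I` are 1-based, so a
0-based element `i` contributes `i+1`; the natural subtraction agrees with the integer one
since the sum of `|I|` distinct positive integers is at least `|I|(|I|+1)/2`). -/
def sgnSet {n : ℕ} (I : Finset (Fin n)) : ℝ :=
  (-1 : ℝ) ^ ((∑ i ∈ I, ((i : ℕ) + 1)) - I.card * (I.card + 1) / 2)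

/-- The block matrix `[Id_n | A]`. -/
def IdA {n : ℕ} (A : Matrix (Fin n) (Fin n) ℝ) : Matrix (Fin n) (Fin (2 * n)) ℝ :=
  Matrix.of fun p q =>
    if h : (q : ℕ) < n then (if (p : ℕ) = (q : ℕ) then 1 else 0)
    else A p ⟨(q : ℕ) - n, by have := q.isLt; omega⟩

/-- The full word `(j_1, …, j_{2N})`: `1, 2,1, 3,2,1, …, n-1,…,1` followed by `(i_1,…,i_N)`. -/
def wordFull (n : ℕ) : List ℕ :=
  (((List.range n).map (fun r => decRun r 1)).flatten) ++ wordD n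

/-- `z(ε) = x_{j_1}(ε) ⋯ x_{j_{2N}}(ε)`. -/
def zeps (n : ℕ) (ε : ℝ) : Matrix (Fin (2 * n)) (Fin (2 * n)) ℝ :=
  ((wordFull n).map (fun i => xMat n i ε)).prod

/-- `Z(ε) = z(ε)ᵀ · z(ε)`. -/
def Zeps (n : ℕ) (ε : ℝ) : Matrix (Fin (2 * n)) (Fin (2 * n)) ℝ :=
  (zeps n ε)ᵀ * zeps n ε

/-- First block `Y₁(ε)` of `[Id_n | A] · Z(ε)`. -/
def Y1 {n : ℕ} (A : Matrix (Fin n) (Fin n) ℝ) (ε : ℝ) : Matrix (Fin n) (Fin n) ℝ :=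
  Matrix.of fun p q => (IdA A * Zeps n ε) p ⟨(q : ℕ), by have := q.isLt; omega⟩

/-- Second block `Y₂(ε)` of `[Id_n | A] · Z(ε)`. -/
def Y2 {n : ℕ} (A : Matrix (Fin n) (Fin n) ℝ) (ε : ℝ) : Matrix (Fin n) (Fin n) ℝ :=
  Matrix.of fun p q => (IdA A * Zeps n ε) p ⟨n + (q : ℕ), by have := q.isLt; omega⟩

/-- The simple generators `s_i` of the Weyl group `W` of `SO(2n)`, as permutations of
`{1,…,2n}` (0-based here): for `1 ≤ i ≤ n-1`, `s_i = (i,i+1)(n+i,n+i+1)`; for `i = n`,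
`s_n = (n,2n-1)(n-1,2n)`. -/
def sGen (n : ℕ) (i : ℕ) : Equiv.Perm (Fin (2 * n)) :=
  if h : 1 ≤ i ∧ i ≤ n - 1 ∧ 2 ≤ n then
    Equiv.swap ⟨i - 1, by omega⟩ ⟨i, by omega⟩ *
      Equiv.swap ⟨n + i - 1, by omega⟩ ⟨n + i, by omega⟩
  else if h2 : i = n ∧ 2 ≤ n then
    Equiv.swap ⟨n - 1, by omega⟩ ⟨2 * n - 2, by omega⟩ *
      Equiv.swap ⟨n - 2, by omega⟩ ⟨2 * n - 1, by omega⟩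
  else 1

/-- Membership in the Weyl group `W`: `σ(n+i) ≡ n + σ(i) (mod 2n)` for all `1 ≤ i ≤ n`,
and the number of `i ∈ {1,…,n}` with `σ(i) > n` is even. (All positions are 0-based; a
0-based value `v` corresponds to the 1-based value `v+1`.) -/
def inW (n : ℕ) (σ : Equiv.Perm (Fin (2 * n))) : Prop :=
  (∀ i : Fin n,
    ((σ ⟨n + (i : ℕ), by have := i.isLt; omega⟩ : Fin (2 * n)) : ℕ)
      ≡ n + ((σ ⟨(i : ℕ), by have := i.isLt; omega⟩ : Fin (2 * n)) : ℕ) [MOD 2 * n]) ∧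
  Even (Finset.univ.filter (fun i : Fin n =>
    n ≤ ((σ ⟨(i : ℕ), by have := i.isLt; omega⟩ : Fin (2 * n)) : ℕ))).card

/-- `I_w = {i ∈ {1,…,n} : w(i) > n}`, as a finset of `Fin n` (0-based). -/
def Iset (n : ℕ) (σ : Equiv.Perm (Fin (2 * n))) : Finset (Fin n) :=
  Finset.univ.filter (fun i : Fin n =>
    n ≤ ((σ ⟨(i : ℕ), by have := i.isLt; omega⟩ : Fin (2 * n)) : ℕ))

/-- The parabolic subgroup `W_{[n-1]}` generated by `s_1, …, s_{n-1}`. -/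
def Wpar (n : ℕ) : Subgroup (Equiv.Perm (Fin (2 * n))) :=
  Subgroup.closure { σ | ∃ i, 1 ≤ i ∧ i ≤ n - 1 ∧ σ = sGen n i }

/-- The standard basis vector `e_i` of `ℝ^{2n}` (with `i : Fin n` 0-based, sitting in
position `i` of the first block). -/
def evec (n : ℕ) (i : Fin n) : Fin (2 * n) → ℝ :=
  Pi.single ⟨(i : ℕ), by have := i.isLt; omega⟩ 1

/-- The standard basis vector `f_j` of `ℝ^{2n}` (position `n + j`). -/
def fvec (n : ℕ) (j : Fin n) : Fin (2 * n) → ℝ :=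
  Pi.single ⟨n + (j : ℕ), by have := j.isLt; omega⟩ 1

/-- `f = ι(f_1)⋯ι(f_n)` in the Clifford algebra. -/
def fElt {n : ℕ} (Q : QuadraticForm ℝ (Fin (2 * n) → ℝ)) : CliffordAlgebra Q :=
  (List.ofFn (fun j : Fin n => CliffordAlgebra.ι Q (fvec n j))).prod

/-- `e_S = ι(e_{l_1})⋯ι(e_{l_s})` where `l_1 < ⋯ < l_s` enumerates `S`. -/
def eProd {n : ℕ} (Q : QuadraticForm ℝ (Fin (2 * n) → ℝ)) (S : Finset (Fin n)) :
    CliffordAlgebra Q :=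
  ((S.sort (· ≤ ·)).map (fun l => CliffordAlgebra.ι Q (evec n l))).prod

/-- `h = Π_{i=1}^n ι(e_i + Σ_j A_{ij} f_j)` (product in increasing order of `i`). -/
def hElt {n : ℕ} (Q : QuadraticForm ℝ (Fin (2 * n) → ℝ)) (A : Matrix (Fin n) (Fin n) ℝ) :
    CliffordAlgebra Q :=
  (List.ofFn (fun i : Fin n =>
    CliffordAlgebra.ι Q (evec n i + ∑ j : Fin n, A i j • fvec n j))).prod

/-- The sorted list of the (1-based) elements of `S ⊆ {1,…,n}`. -/
def valsOf {n : ℕ} (S : Finset (Fin n)) : List ℕ :=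
  (S.sort (· ≤ ·)).map (fun i => (i : ℕ) + 1)

/-- The word `w_1 w_2 ⋯ w_r` where
`w_m = s_n (s_{n-2}⋯s_{i_{2m-1}}) (s_{n-1}⋯s_{i_{2m}})` and `vals` lists `i_1 < i_2 < ⋯`
(1-based); `m` is 0-based here. -/
def uWord (n r : ℕ) (vals : List ℕ) : List ℕ :=
  ((List.range r).map (fun m =>
    n :: (decRun (n - 2) (vals.getD (2 * m) 0) ++ decRun (n - 1) (vals.getD (2 * m + 1) 0)))).flatten

/-- The permutation `u = w_1 w_2 ⋯ w_r`. -/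
def uPerm (n r : ℕ) (vals : List ℕ) : Equiv.Perm (Fin (2 * n)) :=
  ((uWord n r vals).map (sGen n)).prod

/-- `L = r + Σ_{m=1}^{r} ((n-1-i_{2m-1}) + (n-i_{2m}))`. -/
def Lval (n r : ℕ) (vals : List ℕ) : ℕ :=
  r + ∑ m ∈ Finset.range r, ((n - 1 - vals.getD (2 * m) 0) + (n - vals.getD (2 * m + 1) 0))

/-!
The matrix `A(t)` is the Gram matrix, for the standard symplectic form, of the rows of `D Q`, where
`D` is the diagonal matrix of alternating signs and `Q` is a nonnegative lower triangular matrix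
built along the word: a factor `x_i(t)` with `i < n` adds `t` times row `i + 1` of `Q` to row `i`,
and a factor `x_n(t)` appends a new pair of columns, supported in the last two rows. Each of the two
decreasing runs after `x_n` propagates one of the two new columns upwards, which makes positive all
minors of `Q` in the columns paired with the first `c` columns that triangularity does not force to
vanish. By triangularity a minor of `A(t)` in its first `c` columns factors, up to sign, into such a
minor of `Q` and the leading `c × c` minor of `Q`, a product of positive diagonal entries; the sign
`(-1) ^ (j * k)` cancels the signs in `D`.
-/

section RowOperations

variable {R κ ι : Type*}

/-- The elementary row operation adding `t` times row `i + 1` of `Q` to row `i`. Rows are indexed by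
all of `ℕ`, so that no bound on `i` has to be carried around. -/
def addNextRow [Semiring R] (i : ℕ) (t : R) (Q : Matrix ℕ κ R) : Matrix ℕ κ R :=
  Q.updateRow i (Q i + t • Q (i + 1))

theorem addNextRow_apply [Semiring R] (i : ℕ) (t : R) (Q : Matrix ℕ κ R) (a : ℕ) (b : κ) :
    addNextRow i t Q a b = if a = i then Q i b + t * Q (i + 1) b else Q a b := by
  simp [addNextRow, updateRow_apply]

/-- The row operations `addNextRow` encoded by a list of pairs `(i, t)`, performed from left to
right. As in `xMat`, the index `i` is 1-based: the pair `(i, t)` changes row `i - 1`. -/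
def runRowOps [Semiring R] (ops : List (ℕ × R)) (Q : Matrix ℕ κ R) : Matrix ℕ κ R :=
  ops.foldl (fun Q op => addNextRow (op.1 - 1) op.2 Q) Q

theorem runRowOps_induction [Semiring R] {P : Matrix ℕ κ R → Prop} {ops : List (ℕ × R)}
    (step : ∀ op ∈ ops, ∀ Q, P Q → P (addNextRow (op.1 - 1) op.2 Q)) {Q : Matrix ℕ κ R}
    (base : P Q) : P (runRowOps ops Q) :=
  List.foldlRecOn ops _ base fun Q hQ op hop => step op hop Q hQ

theorem runRowOps_nonneg [Semiring R] [PartialOrder R] [IsOrderedRing R] {ops : List (ℕ × R)}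
    (hops : ∀ op ∈ ops, 0 ≤ op.2) {Q : Matrix ℕ κ R} (hQ : ∀ a b, 0 ≤ Q a b) :
    ∀ a b, 0 ≤ runRowOps ops Q a b := by
  refine runRowOps_induction (P := fun Q => ∀ a b, 0 ≤ Q a b) (fun op hop Q hQ a b => ?_) hQ
  rw [addNextRow_apply]
  split_ifs
  · exact add_nonneg (hQ _ b) (mul_nonneg (hops op hop) (hQ _ b))
  · exact hQ a b

theorem runRowOps_eq_zero_above [Semiring R] {ops : List (ℕ × R)} {k : ℕ} {b : κ}
    (hops : ∀ op ∈ ops, k < op.1) {Q : Matrix ℕ κ R} (hQ : ∀ a < k, Q a b = 0) :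
    ∀ a < k, runRowOps ops Q a b = 0 := by
  refine runRowOps_induction (P := fun Q => ∀ a < k, Q a b = 0) (fun op hop Q hQ a ha => ?_) hQ
  have hk := hops op hop
  rw [addNextRow_apply, if_neg (by omega), hQ a ha]

theorem runRowOps_col_eq_self [Semiring R] {ops : List (ℕ × R)} {Q : Matrix ℕ κ R} {b : κ}
    (hops : ∀ op ∈ ops, 1 ≤ op.1 ∧ Q op.1 b = 0) (a : ℕ) : runRowOps ops Q a b = Q a b := by
  refine runRowOps_induction (P := fun Q' => ∀ a, Q' a b = Q a b)
    (fun op hop Q' hQ' a => ?_) (fun _ => rfl) a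
  obtain ⟨hpos, hzero⟩ := hops op hop
  rw [addNextRow_apply, Nat.sub_add_cancel hpos, hQ', hQ', hQ', hzero, mul_zero, add_zero]
  split_ifs with ha
  · rw [ha]
  · rfl

theorem submatrix_addNextRow [DecidableEq ι] [Semiring R] (Q : Matrix ℕ κ R)
    {r : ι → ℕ} (hr : Function.Injective r) (σ : ι → κ) (k : ι) (t : R) :
    (addNextRow (r k) t Q).submatrix r σ = (Q.submatrix r σ).updateRow k
      ((Q.submatrix r σ) k + t • (Q.submatrix (Function.update r k (r k + 1)) σ) k) := by
  ext p q
  simp [addNextRow_apply, updateRow_apply, hr.eq_iff]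

end RowOperations

section MinorPositivity

variable {R : Type*}

theorem det_submatrix_addNextRow {κ ι : Type*} [Fintype ι] [DecidableEq ι] [CommRing R]
    (Q : Matrix ℕ κ R) {r : ι → ℕ} (hr : Function.Injective r) (σ : ι → κ) (k : ι) (t : R) :
    ((addNextRow (r k) t Q).submatrix r σ).det =
      (Q.submatrix r σ).det + t * (Q.submatrix (Function.update r k (r k + 1)) σ).det := by
  have hupdate : (Q.submatrix (Function.update r k (r k + 1)) σ) =
      (Q.submatrix r σ).updateRow k ((Q.submatrix (Function.update r k (r k + 1)) σ) k) := by
    ext p q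
    by_cases hp : p = k <;> simp [hp]
  rw [submatrix_addNextRow Q hr, det_updateRow_add, det_updateRow_smul, updateRow_eq_self,
    ← hupdate]

theorem strictMono_update_succ {α : Type*} [LinearOrder α] {r : α → ℕ} (hr : StrictMono r) {k : α}
    (hk : r k + 1 ∉ Set.range r) : StrictMono (Function.update r k (r k + 1)) := by
  intro x y hxy
  have hlt := hr hxy
  by_cases hx : x = k
  · subst hx
    have hy : r y ≠ r x + 1 := fun h => hk ⟨y, h⟩
    simp only [Function.update_self, Function.update_of_ne hxy.ne']
    omega
  · rw [Function.update_of_ne hx]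
    by_cases hy : y = k
    · subst hy
      simpa using hlt.trans (Nat.lt_succ_self _)
    · rwa [Function.update_of_ne hy]

theorem det_submatrix_addNextRow_cases {κ ι : Type*} [Fintype ι] [LinearOrder ι] [CommRing R]
    (Q : Matrix ℕ κ R) {r : ι → ℕ} (hr : StrictMono r) (σ : ι → κ) (i : ℕ) (t : R) :
    (((addNextRow i t Q).submatrix r σ).det = (Q.submatrix r σ).det ∧
        (i ∈ Set.range r → i + 1 ∈ Set.range r)) ∨
      ∃ k, r k = i ∧ StrictMono (Function.update r k (i + 1)) ∧
        ((addNextRow i t Q).submatrix r σ).det =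
          (Q.submatrix r σ).det + t * (Q.submatrix (Function.update r k (i + 1)) σ).det := by
  by_cases hi : i ∈ Set.range r
  · obtain ⟨k, rfl⟩ := hi
    have hdet := det_submatrix_addNextRow Q hr.injective σ k t
    by_cases hsucc : r k + 1 ∈ Set.range r
    · refine Or.inl ⟨?_, fun _ => hsucc⟩
      obtain ⟨l, hl⟩ := hsucc
      have hlk : l ≠ k := by rintro rfl; omega
      have hrepeat : (Q.submatrix (Function.update r k (r k + 1)) σ).det = 0 :=
        det_zero_of_row_eq hlk (by ext q; simp [hlk, hl])
      rw [hdet, hrepeat, mul_zero, add_zero]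
    · exact Or.inr ⟨k, rfl, strictMono_update_succ hr hsucc, hdet⟩
  · refine Or.inl ⟨?_, fun h => absurd h hi⟩
    congr 1
    ext p q
    rw [submatrix_apply, addNextRow_apply, if_neg fun h => hi ⟨p, h⟩, submatrix_apply]

/-- The minors of `Q` in the columns `σ` and in rows `r 0 < r 1 < ⋯` below `N` are positive as soon
as `σ ≤ r`. For a lower triangular `Q` and increasing `σ`, all the other such minors vanish. -/
def MinorsPos {c : ℕ} [CommRing R] [PartialOrder R] (Q : Matrix ℕ ℕ R) (σ : Fin c → ℕ) (N : ℕ) :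
    Prop :=
  ∀ r : Fin c → ℕ, StrictMono r → (∀ p, r p < N) → (∀ p, σ p ≤ r p) → 0 < (Q.submatrix r σ).det

protected theorem MinorsPos.mono {c : ℕ} [CommRing R] [PartialOrder R] {Q : Matrix ℕ ℕ R}
    {σ : Fin c → ℕ} {N N' : ℕ} (h : MinorsPos Q σ N') (hN : N ≤ N') : MinorsPos Q σ N :=
  fun r hr hrN => h r hr fun p => (hrN p).trans_le hN

protected theorem MinorsPos.congr {c : ℕ} [CommRing R] [PartialOrder R] {Q Q' : Matrix ℕ ℕ R}
    {σ : Fin c → ℕ} {N : ℕ} (h : MinorsPos Q σ N) (hQ : ∀ a p, Q' a (σ p) = Q a (σ p)) :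
    MinorsPos Q' σ N := by
  intro r hr hrN hσr
  have hsub : Q'.submatrix r σ = Q.submatrix r σ := by ext p q; exact hQ _ _
  exact hsub ▸ h r hr hrN hσr

variable [CommRing R] [LinearOrder R] [IsStrictOrderedRing R]

protected theorem MinorsPos.addNextRow {c : ℕ} {Q : Matrix ℕ ℕ R} {σ : Fin c → ℕ} {N i : ℕ} {t : R}
    (h : MinorsPos Q σ N) (ht : 0 < t) (hi : i + 1 < N) : MinorsPos (addNextRow i t Q) σ N := by
  intro r hr hrN hσr
  have hpos := h r hr hrN hσr
  rcases det_submatrix_addNextRow_cases Q hr σ i t with ⟨hdet, -⟩ | ⟨k, rfl, hmono, hdet⟩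
  · rwa [hdet]
  · have hpos' : 0 < (Q.submatrix (Function.update r k (r k + 1)) σ).det := by
      refine h _ hmono (fun p => ?_) (fun p => ?_)
      · by_cases hp : p = k <;> simp [hp, hi, hrN]
      · by_cases hp : p = k
        · subst hp
          simpa using (hσr p).trans (Nat.le_succ _)
        · simpa [hp] using hσr p
    rw [hdet]
    positivity

protected theorem MinorsPos.runRowOps {c : ℕ} {Q : Matrix ℕ ℕ R} {σ : Fin c → ℕ} {N : ℕ}
    {ops : List (ℕ × R)} (h : MinorsPos Q σ N) (hpos : ∀ op ∈ ops, 0 < op.2)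
    (hops : ∀ op ∈ ops, 1 ≤ op.1 ∧ op.1 < N) : MinorsPos (runRowOps ops Q) σ N := by
  refine runRowOps_induction (P := fun Q => MinorsPos Q σ N) (fun op hop Q hQ => ?_) h
  have hbound := hops op hop
  exact hQ.addNextRow (hpos op hop) (by omega)

end MinorPositivity

section DecreasingRuns

variable {R : Type*}

theorem decRun_of_lt {a b : ℕ} (h : a < b) : decRun a b = [] := by
  simp [decRun, Nat.sub_eq_zero_of_le (Nat.succ_le_of_lt h)]

theorem decRun_eq_append {a b : ℕ} (h : b ≤ a) : decRun a b = decRun a (b + 1) ++ [b] := by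
  have hlen : a + 1 - b = (a + 1 - (b + 1)) + 1 := by omega
  rw [decRun, hlen, List.range'_succ, List.reverse_cons, decRun]

theorem mem_decRun {a b x : ℕ} : x ∈ decRun a b ↔ b ≤ x ∧ x ≤ a := by
  simp only [decRun, List.mem_reverse, List.mem_range'_1]
  omega

theorem fst_mem_Icc_of_map_fst_eq_decRun {ops : List (ℕ × R)} {a b : ℕ}
    (h : ops.map Prod.fst = decRun a b) {op : ℕ × R} (hop : op ∈ ops) : op.1 ∈ Set.Icc b a :=
  mem_decRun.1 (h ▸ List.mem_map_of_mem hop)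

theorem det_submatrix_snoc_of_eq_zero [CommRing R] {c : ℕ} {Q : Matrix ℕ ℕ R} {r : Fin (c + 1) → ℕ}
    (σ : Fin c → ℕ) {q : ℕ} (hq : ∀ x : Fin c, Q (r x.castSucc) q = 0) :
    (Q.submatrix r (Fin.snoc σ q)).det =
      Q (r (Fin.last c)) q * (Q.submatrix (fun x => r x.castSucc) σ).det := by
  rw [det_succ_column _ (Fin.last c), Fin.sum_univ_castSucc]
  have hminor : (Q.submatrix r (Fin.snoc σ q)).submatrix Fin.castSucc Fin.castSucc =
      Q.submatrix (fun x => r x.castSucc) σ := by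
    ext x y
    simp
  simp [hq, hminor, ← two_mul]

variable [CommRing R] [LinearOrder R] [IsStrictOrderedRing R]

/-- The invariant of a decreasing run that fills up a new column `q` from its bottom entry, in row
`p`, upwards: once row `l` has been reached, the minors in the columns `σ, q` are nonnegative, and
they are positive if their last row is at least `l`. -/
def MinorsPosFrom {c : ℕ} (Q : Matrix ℕ ℕ R) (σ : Fin c → ℕ) (q l p : ℕ) : Prop :=
  ∀ r : Fin (c + 1) → ℕ, StrictMono r → (∀ x, r x ≤ p) → (∀ x : Fin c, σ x ≤ r x.castSucc) →
    0 ≤ (Q.submatrix r (Fin.snoc σ q)).det ∧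
      (l ≤ r (Fin.last c) → 0 < (Q.submatrix r (Fin.snoc σ q)).det)

theorem MinorsPos.minorsPosFrom_snoc {c : ℕ} {Q : Matrix ℕ ℕ R} {σ : Fin c → ℕ} {q p : ℕ}
    (h : MinorsPos Q σ p) (hzero : ∀ a < p, Q a q = 0) (hpos : 0 < Q p q) :
    MinorsPosFrom Q σ q p p := by
  intro r hr hrp hσr
  have hlt (x : Fin c) : r x.castSucc < p := (hr (Fin.castSucc_lt_last x)).trans_le (hrp _)
  have hminor : 0 < (Q.submatrix (fun x => r x.castSucc) σ).det :=
    h _ (hr.comp Fin.strictMono_castSucc) hlt hσr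
  rw [det_submatrix_snoc_of_eq_zero σ fun x => hzero _ (hlt x)]
  rcases (hrp (Fin.last c)).lt_or_eq with hlast | hlast
  · rw [hzero _ hlast, zero_mul]
    exact ⟨le_rfl, fun h => absurd h hlast.not_ge⟩
  · rw [hlast]
    exact ⟨by positivity, fun _ => by positivity⟩

protected theorem MinorsPosFrom.addNextRow {c : ℕ} {Q : Matrix ℕ ℕ R} {σ : Fin c → ℕ} {q l p : ℕ}
    {t : R} (h : MinorsPosFrom Q σ q (l + 1) p) (ht : 0 < t) (hl : l + 1 ≤ p) :
    MinorsPosFrom (addNextRow l t Q) σ q l p := by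
  intro r hr hrp hσr
  obtain ⟨hnonneg, hpos⟩ := h r hr hrp hσr
  rcases det_submatrix_addNextRow_cases Q hr (Fin.snoc σ q) l t with
    ⟨hdet, hsucc⟩ | ⟨k, rfl, hmono, hdet⟩ <;> rw [hdet]
  · refine ⟨hnonneg, fun hlast => hpos (hlast.lt_of_ne fun heq => ?_)⟩
    obtain ⟨x, hx⟩ := hsucc ⟨_, heq.symm⟩
    have hle := hr.monotone (Fin.le_last x)
    omega
  · obtain ⟨hnonneg', hpos'⟩ := h _ hmono
      (fun x => by by_cases hx : x = k <;> simp [hx, hl, hrp])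
      (fun x => (hσr x).trans (by by_cases hx : x.castSucc = k <;> simp [hx]))
    refine ⟨by positivity, fun hlast => ?_⟩
    rcases hlast.lt_or_eq with hlt | heq
    · have hpos := hpos hlt
      positivity
    · have hk : k = Fin.last c := hr.injective heq
      have hpos' := hpos' (by simp [hk])
      positivity

protected theorem MinorsPosFrom.runRowOps {c : ℕ} {Q : Matrix ℕ ℕ R} {σ : Fin c → ℕ} {q p : ℕ}
    (h : MinorsPosFrom Q σ q p p) {l : ℕ} (hl : l ≤ p) {ops : List (ℕ × R)}
    (hops : ops.map Prod.fst = decRun p (l + 1)) (hpos : ∀ op ∈ ops, 0 < op.2) :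
    MinorsPosFrom (runRowOps ops Q) σ q l p := by
  induction hl using Nat.decreasingInduction generalizing ops with
  | self =>
    rw [decRun_of_lt p.lt_succ_self, List.map_eq_nil_iff] at hops
    rwa [hops]
  | of_succ l hl ih =>
    rw [decRun_eq_append hl, List.map_eq_append_iff] at hops
    obtain ⟨ops', lastOp, rfl, hops', hlast⟩ := hops
    obtain ⟨⟨i, t⟩, rfl, rfl⟩ := List.map_eq_singleton_iff.1 hlast
    simp only [List.mem_append, List.mem_singleton] at hpos
    have hstep := (ih hops' fun op hop => hpos op (.inl hop)).addNextRow (hpos _ (.inr rfl)) hl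
    simpa [runRowOps] using hstep

theorem MinorsPos.snoc_runRowOps {c : ℕ} {Q : Matrix ℕ ℕ R} {σ : Fin c → ℕ} {q p : ℕ}
    (h : MinorsPos Q σ p) (hzero : ∀ a < p, Q a q = 0) (hbottom : 0 < Q p q) (hq : q ≤ p)
    {ops : List (ℕ × R)} (hops : ops.map Prod.fst = decRun p (q + 1))
    (hpos : ∀ op ∈ ops, 0 < op.2) :
    MinorsPos (runRowOps ops Q) (Fin.snoc σ q) (p + 1) := by
  intro r hr hrp hσr
  refine ((h.minorsPosFrom_snoc hzero hbottom).runRowOps hq hops hpos r hr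
    (fun x => Nat.lt_succ_iff.1 (hrp x)) fun x => ?_).2 ?_
  · simpa using hσr x.castSucc
  · simpa using hσr (Fin.last c)

end DecreasingRuns

section PartnerColumns

/-- The partner of the column `y` in the pairing `(0, 1), (2, 3), …`. -/
def partner (y : ℕ) : ℕ :=
  if y % 2 = 0 then y + 1 else y - 1

theorem partner_two_add (y : ℕ) : partner (2 + y) = 2 + partner y := by
  unfold partner
  split_ifs <;> omega

/-- The increasing enumeration of the partners of the columns `0, …, c - 1`: these are the same
columns if `c` is even, and `0, …, c - 2, c` if `c` is odd. -/
def partnerCols (c : ℕ) (x : Fin c) : ℕ :=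
  if (x : ℕ) % 2 = 0 ∧ (x : ℕ) + 1 = c then x + 1 else x

theorem partnerCols_lt {c M : ℕ} (hc : c ≤ 2 * M) (x : Fin c) : partnerCols c x < 2 * M := by
  unfold partnerCols
  split_ifs <;> omega

theorem partnerCols_injective (c : ℕ) : Function.Injective (partnerCols c) := by
  intro x y h
  unfold partnerCols at h
  ext
  split_ifs at h <;> omega

theorem partnerCols_two_mul (m : ℕ) : partnerCols (2 * m) = Fin.val := by
  ext x
  unfold partnerCols
  split_ifs <;> omega

theorem partnerCols_two_mul_add_one (m : ℕ) :
    partnerCols (2 * m + 1) = Fin.snoc (Fin.val : Fin (2 * m) → ℕ) (2 * m + 1) := by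
  ext x
  refine Fin.lastCases ?_ (fun x => ?_) x
  · simp [partnerCols]
  · simp [partnerCols, x.isLt.ne]

theorem partnerCols_castAdd (c : ℕ) (x : Fin 2) : partnerCols (2 + c) (x.castAdd c) = x := by
  simp only [partnerCols, Fin.val_castAdd]
  split_ifs <;> omega

theorem partnerCols_natAdd (c : ℕ) (x : Fin c) :
    partnerCols (2 + c) (x.natAdd 2) = 2 + partnerCols c x := by
  simp only [partnerCols, Fin.val_natAdd]
  split_ifs <;> omega

theorem exists_partnerCols_eq_partner {c : ℕ} (y : Fin c) :
    ∃ x, partnerCols c x = partner y := by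
  by_cases hlast : (y : ℕ) % 2 = 0 ∧ (y : ℕ) + 1 = c
  · exact ⟨y, by rw [partnerCols, if_pos hlast, partner, if_pos hlast.1]⟩
  · have hlt : partner y < c := by
      unfold partner
      split_ifs <;> omega
    refine ⟨⟨partner y, hlt⟩, if_neg ?_⟩
    simp only [partner]
    split_ifs <;> omega

theorem finVal_succ_eq_snoc (c : ℕ) : (Fin.val : Fin (c + 1) → ℕ) = Fin.snoc Fin.val c := by
  ext x
  refine Fin.lastCases ?_ (fun x => ?_) x <;> simp

end PartnerColumns

section PositiveFactor

variable {R : Type*} [CommRing R]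

/-- Replace the column pair `(2m, 2m + 1)` of `Q` by `t` times the unit vector in row `n - 2` and
the unit vector in row `n - 1`. -/
def appendPair (n m : ℕ) (t : R) (Q : Matrix ℕ ℕ R) : Matrix ℕ ℕ R :=
  (Q.updateCol (2 * m) (Pi.single (n - 2) t)).updateCol (2 * m + 1) (Pi.single (n - 1) 1)

theorem appendPair_apply_of_lt (n : ℕ) {m : ℕ} (t : R) (Q : Matrix ℕ ℕ R) (a : ℕ) {b : ℕ}
    (hb : b < 2 * m) : appendPair n m t Q a b = Q a b := by
  rw [appendPair, updateCol_ne (by omega), updateCol_ne (by omega)]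

theorem appendPair_apply_fst (n m : ℕ) (t : R) (Q : Matrix ℕ ℕ R) (a : ℕ) :
    appendPair n m t Q a (2 * m) = if a = n - 2 then t else 0 := by
  rw [appendPair, updateCol_ne (by omega), updateCol_self, Pi.single_apply]

theorem appendPair_apply_snd (n m : ℕ) (t : R) (Q : Matrix ℕ ℕ R) (a : ℕ) :
    appendPair n m t Q a (2 * m + 1) = if a = n - 1 then 1 else 0 := by
  rw [appendPair, updateCol_self, Pi.single_apply]

theorem appendPair_nonneg [PartialOrder R] [IsOrderedRing R] (n m : ℕ) {t : R} (ht : 0 ≤ t)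
    {Q : Matrix ℕ ℕ R} (hQ : ∀ a b, 0 ≤ Q a b) (a b : ℕ) : 0 ≤ appendPair n m t Q a b := by
  simp only [appendPair, updateCol_apply, Pi.single_apply]
  split_ifs
  exacts [zero_le_one, le_rfl, ht, le_rfl, hQ a b]

protected theorem MinorsPos.appendPair [PartialOrder R] {c N m : ℕ} {Q : Matrix ℕ ℕ R}
    {σ : Fin c → ℕ} (h : MinorsPos Q σ N) (hσ : ∀ p, σ p < 2 * m) (n : ℕ) (t : R) :
    MinorsPos (appendPair n m t Q) σ N :=
  h.congr fun a p => appendPair_apply_of_lt n t Q a (hσ p)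

theorem runRowOps_appendPair_apply_snd {n m : ℕ} {ops : List (ℕ × R)}
    (hops : ops.map Prod.fst = decRun (n - 2) (2 * m + 1)) (hn : 2 ≤ n) (t : R)
    (Q : Matrix ℕ ℕ R) (a : ℕ) :
    runRowOps ops (appendPair n m t Q) a (2 * m + 1) = if a = n - 1 then 1 else 0 := by
  rw [← appendPair_apply_snd n m t Q]
  refine runRowOps_col_eq_self (fun op hop => ?_) a
  obtain ⟨hge, hle⟩ := fst_mem_Icc_of_map_fst_eq_decRun hops hop
  rw [appendPair_apply_snd]
  exact ⟨by omega, if_neg (by omega)⟩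

theorem runRowOps_appendPair_lower {n m : ℕ} {Q : Matrix ℕ ℕ R} {ops : List (ℕ × R)}
    (hQ : ∀ b < 2 * m, ∀ a < b, Q a b = 0) (hm : 2 * m + 2 ≤ n)
    (hops : ops.map Prod.fst = decRun (n - 2) (2 * m + 1)) (t : R) :
    ∀ b < 2 * m + 2, ∀ a < b, runRowOps ops (appendPair n m t Q) a b = 0 := by
  intro b hb a hab
  obtain rfl | hlt : b = 2 * m + 1 ∨ b < 2 * m + 1 := by omega
  · rw [runRowOps_appendPair_apply_snd hops (by omega), if_neg (by omega)]
  · refine runRowOps_eq_zero_above (fun op hop => ?_) (fun a ha => ?_) a hab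
    · have hop := (fst_mem_Icc_of_map_fst_eq_decRun hops hop).1
      omega
    · obtain rfl | hlt : b = 2 * m ∨ b < 2 * m := by omega
      · rw [appendPair_apply_fst, if_neg (by omega)]
      · rw [appendPair_apply_of_lt _ _ _ _ hlt, hQ b hlt a ha]

variable [LinearOrder R] [IsStrictOrderedRing R]

/-- `Q` is nonnegative, its first `2m` columns are lower triangular, and for `c ≤ 2m` its minors in
the partners of the columns `0, …, c - 1` and in rows below `n` are positive wherever triangularity
permits. -/
structure IsPositiveFactor (n m : ℕ) (Q : Matrix ℕ ℕ R) : Prop where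
  nonneg : ∀ a b, 0 ≤ Q a b
  lower : ∀ b < 2 * m, ∀ a < b, Q a b = 0
  minorsPos : ∀ c ≤ 2 * m, MinorsPos Q (partnerCols c) n

theorem isPositiveFactor_zero (n : ℕ) : IsPositiveFactor n 0 (0 : Matrix ℕ ℕ R) where
  nonneg _ _ := le_rfl
  lower b hb := by omega
  minorsPos c hc := by
    obtain rfl : c = 0 := by omega
    intro r _ _ _
    rw [det_isEmpty]
    exact zero_lt_one

namespace IsPositiveFactor

variable {n m : ℕ} {Q : Matrix ℕ ℕ R} {t : R} {ops₁ ops₂ : List (ℕ × R)}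

theorem runRowOps_minorsPos (h : IsPositiveFactor n m Q)
    (hops₁ : ops₁.map Prod.fst = decRun (n - 2) (2 * m + 1)) (hpos₁ : ∀ op ∈ ops₁, 0 < op.2)
    {c : ℕ} (hc : c ≤ 2 * m) :
    MinorsPos (runRowOps ops₁ (appendPair n m t Q)) (partnerCols c) n := by
  refine ((h.minorsPos c hc).appendPair (partnerCols_lt hc) n t).runRowOps hpos₁ fun op hop => ?_
  obtain ⟨hge, hle⟩ := fst_mem_Icc_of_map_fst_eq_decRun hops₁ hop
  omega

theorem runRowOps_minorsPos_val (h : IsPositiveFactor n m Q) (hm : 2 * m + 2 ≤ n) (ht : 0 < t)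
    (hops₁ : ops₁.map Prod.fst = decRun (n - 2) (2 * m + 1)) (hpos₁ : ∀ op ∈ ops₁, 0 < op.2) :
    MinorsPos (runRowOps ops₁ (appendPair n m t Q)) (Fin.val : Fin (2 * m + 1) → ℕ) (n - 1) := by
  have hval : MinorsPos (appendPair n m t Q) (Fin.val : Fin (2 * m) → ℕ) (n - 2) := by
    rw [← partnerCols_two_mul]
    exact ((h.minorsPos _ le_rfl).appendPair (partnerCols_lt le_rfl) n t).mono (by omega)
  have hrun := hval.snoc_runRowOps (q := 2 * m)
    (fun a ha => by rw [appendPair_apply_fst, if_neg ha.ne])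
    (by rwa [appendPair_apply_fst, if_pos rfl]) (by omega) hops₁ hpos₁
  rw [finVal_succ_eq_snoc]
  exact hrun.mono (by omega)

theorem block_minorsPos (h : IsPositiveFactor n m Q) (hm : 2 * m + 2 ≤ n) (ht : 0 < t)
    (hops₁ : ops₁.map Prod.fst = decRun (n - 2) (2 * m + 1)) (hpos₁ : ∀ op ∈ ops₁, 0 < op.2)
    (hops₂ : ops₂.map Prod.fst = decRun (n - 1) (2 * m + 2)) (hpos₂ : ∀ op ∈ ops₂, 0 < op.2) :
    ∀ c ≤ 2 * (m + 1),
      MinorsPos (runRowOps ops₂ (runRowOps ops₁ (appendPair n m t Q))) (partnerCols c) n := by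
  intro c hc
  have hsnoc {c : ℕ} {σ : Fin c → ℕ}
      (hσ : MinorsPos (runRowOps ops₁ (appendPair n m t Q)) σ (n - 1)) :
      MinorsPos (runRowOps ops₂ (runRowOps ops₁ (appendPair n m t Q)))
        (Fin.snoc σ (2 * m + 1)) n := by
    refine (hσ.snoc_runRowOps (fun a ha => ?_) ?_ (by omega) hops₂ hpos₂).mono (by omega)
    · rw [runRowOps_appendPair_apply_snd hops₁ (by omega), if_neg ha.ne]
    · rw [runRowOps_appendPair_apply_snd hops₁ (by omega), if_pos rfl]
      exact zero_lt_one
  obtain hle | rfl | rfl : c ≤ 2 * m ∨ c = 2 * m + 1 ∨ c = 2 * (m + 1) := by omega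
  · refine (h.runRowOps_minorsPos hops₁ hpos₁ hle).runRowOps hpos₂ fun op hop => ?_
    obtain ⟨hge, hle⟩ := fst_mem_Icc_of_map_fst_eq_decRun hops₂ hop
    omega
  · rw [partnerCols_two_mul_add_one, ← partnerCols_two_mul]
    exact hsnoc ((h.runRowOps_minorsPos hops₁ hpos₁ le_rfl).mono (by omega))
  · rw [partnerCols_two_mul, mul_add_one, finVal_succ_eq_snoc]
    exact hsnoc (h.runRowOps_minorsPos_val hm ht hops₁ hpos₁)

theorem block (h : IsPositiveFactor n m Q) (hm : 2 * m + 2 ≤ n) (ht : 0 < t)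
    (hops₁ : ops₁.map Prod.fst = decRun (n - 2) (2 * m + 1)) (hpos₁ : ∀ op ∈ ops₁, 0 < op.2)
    (hops₂ : ops₂.map Prod.fst = decRun (n - 1) (2 * m + 2)) (hpos₂ : ∀ op ∈ ops₂, 0 < op.2) :
    IsPositiveFactor n (m + 1) (runRowOps ops₂ (runRowOps ops₁ (appendPair n m t Q))) where
  nonneg := runRowOps_nonneg (fun op hop => (hpos₂ op hop).le) <|
    runRowOps_nonneg (fun op hop => (hpos₁ op hop).le) <| appendPair_nonneg n m ht.le h.nonneg
  lower b hb := by
    refine runRowOps_eq_zero_above (fun op hop => ?_)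
      (runRowOps_appendPair_lower h.lower hm hops₁ t b hb)
    have hop := (fst_mem_Icc_of_map_fst_eq_decRun hops₂ hop).1
    omega
  minorsPos := h.block_minorsPos hm ht hops₁ hpos₁ hops₂ hpos₂

end IsPositiveFactor

end PositiveFactor

section SkewGram

variable {R : Type*} [CommRing R]

/-- Replace each pair of columns `(u, v)` of `Q` by `(v, -u)`. -/
def rotatePairs {ι : Type*} (Q : Matrix ι ℕ R) : Matrix ι ℕ R :=
  of fun a y => (-1) ^ y * Q a (partner y)

theorem rotatePairs_mul {ι κ : Type*} [Fintype κ] (T : Matrix ι κ R) (Q : Matrix κ ℕ R) :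
    rotatePairs (T * Q) = T * rotatePairs Q := by
  ext a y
  simp only [rotatePairs, of_apply, mul_apply, Finset.mul_sum]
  exact Finset.sum_congr rfl fun _ _ => mul_left_comm _ _ _

/-- The signed permutation matrix expressing the first `c` columns of `rotatePairs Q` through the
columns `partnerCols c` of `Q`. -/
def pairingMatrix (R : Type*) [CommRing R] (c : ℕ) : Matrix (Fin c) (Fin c) R :=
  (rotatePairs (1 : Matrix ℕ ℕ R)).submatrix (partnerCols c) Fin.val

theorem pairingMatrix_apply (c : ℕ) (x y : Fin c) :
    pairingMatrix R c x y = if partnerCols c x = partner y then (-1) ^ (y : ℕ) else 0 := by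
  simp [pairingMatrix, rotatePairs, one_apply]

theorem rotatePairs_submatrix_val {ι : Type*} {c : ℕ} (Q : Matrix ι ℕ R) (r : Fin c → ι) :
    (rotatePairs Q).submatrix r (Fin.val : Fin c → ℕ) =
      Q.submatrix r (partnerCols c) * pairingMatrix R c := by
  ext p y
  obtain ⟨x, hx⟩ := exists_partnerCols_eq_partner y
  rw [mul_apply, Finset.sum_eq_single x]
  · rw [pairingMatrix_apply, if_pos hx, submatrix_apply, submatrix_apply, hx, mul_comm]
    rfl
  · intro x' _ hne
    have hne' : partnerCols c x' ≠ partner y :=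
      fun h => hne (partnerCols_injective c (h.trans hx.symm))
    rw [pairingMatrix_apply, if_neg hne', mul_zero]
  · simp

theorem pairingMatrix_add_two (c : ℕ) :
    (pairingMatrix R (2 + c)).submatrix finSumFinEquiv finSumFinEquiv =
      fromBlocks !![0, -1; 1, 0] 0 0 (pairingMatrix R c) := by
  ext (x | x) (y | y) <;>
    simp only [submatrix_apply, finSumFinEquiv_apply_left, finSumFinEquiv_apply_right,
      pairingMatrix_apply, partnerCols_castAdd, partnerCols_natAdd, Fin.val_castAdd,
      Fin.val_natAdd, partner_two_add, fromBlocks_apply₁₁, fromBlocks_apply₁₂,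
      fromBlocks_apply₂₁, fromBlocks_apply₂₂]
  · fin_cases x <;> fin_cases y <;> simp [partner]
  · exact if_neg (by omega)
  · refine if_neg ?_
    unfold partner
    split_ifs <;> omega
  · simp [pow_add]

theorem det_pairingMatrix (c : ℕ) : (pairingMatrix R c).det = 1 := by
  induction c using Nat.twoStepInduction with
  | zero => exact det_isEmpty
  | one => simp [pairingMatrix_apply, partnerCols, partner]
  | more c ih _ =>
    rw [add_comm, ← det_submatrix_equiv_self finSumFinEquiv, pairingMatrix_add_two,
      det_fromBlocks_zero₂₁, det_fin_two_of, ih]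
    ring

/-- The Gram matrix of the rows of `Q` for the standard symplectic form on the first `M` pairs of
columns. -/
def skewGram {ι : Type*} (M : ℕ) (Q : Matrix ι ℕ R) : Matrix ι ι R :=
  (rotatePairs Q).submatrix id (Fin.val : Fin (2 * M) → ℕ) *
    (Q.submatrix id (Fin.val : Fin (2 * M) → ℕ))ᵀ

theorem skewGram_mul {ι κ : Type*} [Fintype κ] (M : ℕ) (T : Matrix ι κ R) (Q : Matrix κ ℕ R) :
    skewGram M (T * Q) = T * skewGram M Q * Tᵀ := by
  have hcols (Q : Matrix κ ℕ R) : (T * Q).submatrix id (Fin.val : Fin (2 * M) → ℕ) =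
      T * Q.submatrix id Fin.val := rfl
  rw [skewGram, rotatePairs_mul, hcols, hcols, transpose_mul, skewGram]
  simp only [Matrix.mul_assoc]

theorem skewGram_apply {ι : Type*} (M : ℕ) (Q : Matrix ι ℕ R) (a b : ι) :
    skewGram M Q a b = ∑ k ∈ Finset.range M,
      (Q a (2 * k + 1) * Q b (2 * k) - Q a (2 * k) * Q b (2 * k + 1)) := by
  simp only [skewGram, mul_apply, submatrix_apply, transpose_apply, id]
  rw [← Finset.sum_range fun y => rotatePairs Q a y * Q b y]
  induction M with
  | zero => simp
  | succ M ih =>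
    have hodd : (2 * M + 1) % 2 ≠ 0 := by omega
    rw [mul_add_one, Finset.sum_range_succ, Finset.sum_range_succ, Finset.sum_range_succ, ih]
    simp only [rotatePairs, of_apply, partner, Nat.mul_mod_right, if_true, if_neg hodd, pow_add,
      pow_mul, Nat.add_sub_cancel]
    ring

theorem det_skewGram_submatrix {ι : Type*} {c M : ℕ} (hc : c ≤ 2 * M) {Q : Matrix ι ℕ R}
    (r : Fin c → ι) {s : Fin c → ι} (hs : ∀ p y, c ≤ y → y < 2 * M → Q (s p) y = 0) :
    ((skewGram M Q).submatrix r s).det =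
      (Q.submatrix r (partnerCols c)).det * (Q.submatrix s Fin.val).det := by
  have htruncate : (skewGram M Q).submatrix r s =
      (rotatePairs Q).submatrix r (Fin.val : Fin c → ℕ) *
        (Q.submatrix s (Fin.val : Fin c → ℕ))ᵀ := by
    ext p q
    simp only [skewGram, submatrix_apply, mul_apply, transpose_apply, id]
    rw [← Finset.sum_range fun y => rotatePairs Q (r p) y * Q (s q) y,
      ← Finset.sum_range fun y => rotatePairs Q (r p) y * Q (s q) y]
    refine (Finset.sum_subset (Finset.range_mono hc) fun y hy hyc => ?_).symm
    rw [hs q y (by simpa using hyc) (by simpa using hy), mul_zero]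
  rw [htruncate, rotatePairs_submatrix_val, det_mul, det_mul, det_pairingMatrix, mul_one,
    det_transpose]

end SkewGram

section AlternatingSigns

variable {R : Type*} [CommRing R] {n : ℕ}

/-- The first `n` rows of `Q` with alternating signs. They account for the inverse in
`A = X₁⁻¹ X₂`: adding `t` times the next row to a row of `Q` becomes left multiplication by the
inverse of a block of `x_i(t)`. -/
def alternateSigns (n : ℕ) (Q : Matrix ℕ ℕ R) : Matrix (Fin n) ℕ R :=
  of fun i b => (-1) ^ (i : ℕ) * Q i b

theorem alternateSigns_addNextRow {i i' : Fin n} (hi : (i' : ℕ) = i + 1) (t : R)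
    (Q : Matrix ℕ ℕ R) :
    alternateSigns n (addNextRow i t Q) = transvection i i' (-t) * alternateSigns n Q := by
  ext a b
  by_cases ha : a = i
  · rw [ha, transvection_mul_apply_same]
    simp only [alternateSigns, of_apply, addNextRow_apply, if_true, hi]
    ring
  · rw [transvection_mul_apply_of_ne _ _ _ _ ha]
    simp [alternateSigns, addNextRow_apply, Fin.val_inj, ha]

theorem skewGram_alternateSigns_addNextRow {i i' : Fin n} (hi : (i' : ℕ) = i + 1) (M : ℕ) (t : R)
    (Q : Matrix ℕ ℕ R) :
    skewGram M (alternateSigns n (addNextRow i t Q)) =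
      transvection i i' (-t) * skewGram M (alternateSigns n Q) * transvection i' i (-t) := by
  rw [alternateSigns_addNextRow hi, skewGram_mul]
  simp [transvection]

theorem skewGram_alternateSigns_appendPair {p q : Fin n} (hp : (p : ℕ) + 2 = n)
    (hq : (q : ℕ) + 1 = n) (m : ℕ) (t : R) (Q : Matrix ℕ ℕ R) :
    skewGram (m + 1) (alternateSigns n (appendPair n m t Q)) =
      skewGram m (alternateSigns n Q) + (single p q t - single q p t) := by
  ext a b
  rw [Matrix.add_apply, skewGram_apply, skewGram_apply, Finset.sum_range_succ]
  congr 1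
  · refine Finset.sum_congr rfl fun k hk => ?_
    have hk := Finset.mem_range.1 hk
    simp only [alternateSigns, of_apply]
    rw [appendPair_apply_of_lt, appendPair_apply_of_lt, appendPair_apply_of_lt,
      appendPair_apply_of_lt] <;> omega
  · have hp' : n - 2 = p := by omega
    have hq' : n - 1 = q := by omega
    have hsign : (-1 : R) ^ (p : ℕ) * (-1) ^ (q : ℕ) = -1 := by
      rw [show (q : ℕ) = p + 1 by omega, pow_succ, ← mul_assoc, ← mul_pow]
      simp
    simp only [alternateSigns, of_apply, appendPair_apply_fst, appendPair_apply_snd,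
      Matrix.sub_apply, single_apply, hp', hq', Fin.val_inj, eq_comm (a := p), eq_comm (a := q)]
    grind

end AlternatingSigns

section TopQuotient

variable {R ι : Type*} [CommRing R] [Fintype ι] [DecidableEq ι]

/-- The upper half `[X₁ | X₂]` of `G` satisfies `det X₁ = 1` and `X₁⁻¹ X₂ = A`. -/
def IsTopQuotient (G : Matrix (ι ⊕ ι) (ι ⊕ ι) R) (A : Matrix ι ι R) : Prop :=
  G.toBlocks₁₁.det = 1 ∧ G.toBlocks₁₂ = G.toBlocks₁₁ * A

theorem isTopQuotient_one : IsTopQuotient (1 : Matrix (ι ⊕ ι) (ι ⊕ ι) R) 0 := by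
  simp [IsTopQuotient, ← fromBlocks_one]

theorem IsTopQuotient.inv_mul_eq {G : Matrix (ι ⊕ ι) (ι ⊕ ι) R} {A : Matrix ι ι R}
    (h : IsTopQuotient G A) : G.toBlocks₁₁⁻¹ * G.toBlocks₁₂ = A := by
  rw [h.2, nonsing_inv_mul_cancel_left _ _ (h.1 ▸ isUnit_one)]

theorem IsTopQuotient.mul_fromBlocks {G : Matrix (ι ⊕ ι) (ι ⊕ ι) R} {A A' P B S : Matrix ι ι R}
    (h : IsTopQuotient G A) (hP : P.det = 1) (hA' : P * A' = B + A * S) :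
    IsTopQuotient (G * fromBlocks P B 0 S) A' := by
  have hmul : G * fromBlocks P B 0 S = fromBlocks (G.toBlocks₁₁ * P)
      (G.toBlocks₁₁ * B + G.toBlocks₁₂ * S) (G.toBlocks₂₁ * P)
      (G.toBlocks₂₁ * B + G.toBlocks₂₂ * S) := by
    conv_lhs => rw [← fromBlocks_toBlocks G, fromBlocks_multiply]
    simp
  rw [IsTopQuotient, hmul, toBlocks_fromBlocks₁₁, toBlocks_fromBlocks₁₂, det_mul, h.1, hP, h.2]
  exact ⟨one_mul 1, by rw [Matrix.mul_assoc, Matrix.mul_assoc, hA', Matrix.mul_add]⟩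

end TopQuotient

section Generators

variable {n : ℕ}

/-- The splitting of `Fin (2 * n)` into its lower and upper half. -/
def halvesEquiv (n : ℕ) : Fin n ⊕ Fin n ≃ Fin (2 * n) :=
  finSumFinEquiv.trans (finCongr (two_mul n).symm)

theorem val_halvesEquiv_inl (x : Fin n) : (halvesEquiv n (.inl x) : ℕ) = x := by
  simp [halvesEquiv]

theorem val_halvesEquiv_inr (x : Fin n) : (halvesEquiv n (.inr x) : ℕ) = n + x := by
  simp [halvesEquiv, add_comm]

theorem xMat_submatrix_halvesEquiv_of_lt {i i' : Fin n} (hi : (i' : ℕ) = i + 1) (t : ℝ) :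
    (xMat n i' t).submatrix (halvesEquiv n) (halvesEquiv n) =
      fromBlocks (transvection i i' t) 0 0 (transvection i' i (-t)) := by
  ext (x | x) (y | y) <;>
    simp only [submatrix_apply, xMat, of_apply, val_halvesEquiv_inl, val_halvesEquiv_inr,
      fromBlocks_apply₁₁, fromBlocks_apply₁₂, fromBlocks_apply₂₁, fromBlocks_apply₂₂,
      transvection, Matrix.add_apply, Matrix.zero_apply, one_apply, single_apply, Fin.ext_iff] <;>
    split_ifs <;> first | omega | simp

theorem xMat_submatrix_halvesEquiv_self {p q : Fin n} (hp : (p : ℕ) + 2 = n)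
    (hq : (q : ℕ) + 1 = n) (t : ℝ) :
    (xMat n n t).submatrix (halvesEquiv n) (halvesEquiv n) =
      fromBlocks 1 (single p q t - single q p t) 0 1 := by
  ext (x | x) (y | y) <;>
    simp only [submatrix_apply, xMat, of_apply, val_halvesEquiv_inl, val_halvesEquiv_inr,
      fromBlocks_apply₁₁, fromBlocks_apply₁₂, fromBlocks_apply₂₁, fromBlocks_apply₂₂,
      Matrix.sub_apply, Matrix.zero_apply, one_apply, single_apply, Fin.ext_iff] <;>
    split_ifs <;> first | omega | simp

variable {G : Matrix (Fin (2 * n)) (Fin (2 * n)) ℝ} {M : ℕ} {Q : Matrix ℕ ℕ ℝ}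

/-- The upper half `[X₁ | X₂]` of `G` encodes `Q`: `det X₁ = 1`, and `X₁⁻¹ X₂` is the skew Gram
matrix of `Q` with alternating signs. -/
def IsRepresentedBy (G : Matrix (Fin (2 * n)) (Fin (2 * n)) ℝ) (M : ℕ) (Q : Matrix ℕ ℕ ℝ) : Prop :=
  IsTopQuotient (G.submatrix (halvesEquiv n) (halvesEquiv n)) (skewGram M (alternateSigns n Q))

namespace IsRepresentedBy

theorem one (Q : Matrix ℕ ℕ ℝ) :
    IsRepresentedBy (1 : Matrix (Fin (2 * n)) (Fin (2 * n)) ℝ) 0 Q := by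
  have hzero : skewGram 0 (alternateSigns n Q) = 0 := by
    ext a b
    simp [skewGram_apply]
  rw [IsRepresentedBy, submatrix_one_equiv, hzero]
  exact isTopQuotient_one

theorem mul_xMat_of_lt (h : IsRepresentedBy G M Q) {i i' : Fin n} (hi : (i' : ℕ) = i + 1)
    (t : ℝ) : IsRepresentedBy (G * xMat n i' t) M (addNextRow i t Q) := by
  have hne : i ≠ i' := by omega
  rw [IsRepresentedBy, ← submatrix_mul_equiv _ _ _ (halvesEquiv n),
    xMat_submatrix_halvesEquiv_of_lt hi]
  refine IsTopQuotient.mul_fromBlocks h (det_transvection_of_ne _ _ hne _) ?_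
  rw [skewGram_alternateSigns_addNextRow hi, ← Matrix.mul_assoc, ← Matrix.mul_assoc,
    transvection_mul_transvection_same _ _ hne, add_neg_cancel, transvection_zero,
    Matrix.one_mul, zero_add]

theorem mul_xMat_self (h : IsRepresentedBy G M Q) (hn : 2 ≤ n) (t : ℝ) :
    IsRepresentedBy (G * xMat n n t) (M + 1) (appendPair n M t Q) := by
  have hp : ((⟨n - 2, by omega⟩ : Fin n) : ℕ) + 2 = n := Nat.sub_add_cancel hn
  have hq : ((⟨n - 1, by omega⟩ : Fin n) : ℕ) + 1 = n := Nat.sub_add_cancel (by omega)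
  rw [IsRepresentedBy, ← submatrix_mul_equiv _ _ _ (halvesEquiv n),
    xMat_submatrix_halvesEquiv_self hp hq]
  refine IsTopQuotient.mul_fromBlocks h det_one ?_
  rw [skewGram_alternateSigns_appendPair hp hq, Matrix.one_mul, Matrix.mul_one, add_comm]

theorem mul_prod_xMat (h : IsRepresentedBy G M Q) {ops : List (ℕ × ℝ)}
    (hops : ∀ op ∈ ops, 1 ≤ op.1 ∧ op.1 < n) :
    IsRepresentedBy (G * (ops.map fun op => xMat n op.1 op.2).prod) M (runRowOps ops Q) := by
  induction ops generalizing G Q with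
  | nil => simpa [runRowOps] using h
  | cons op ops ih =>
    rw [List.forall_mem_cons] at hops
    obtain ⟨⟨hpos, hlt⟩, hops⟩ := hops
    have hop := h.mul_xMat_of_lt (i := ⟨op.1 - 1, by omega⟩) (i' := ⟨op.1, hlt⟩)
      (Nat.sub_add_cancel hpos).symm op.2
    rw [List.map_cons, List.prod_cons, ← Matrix.mul_assoc]
    exact ih hop hops

end IsRepresentedBy

end Generators

section Word

variable {n m : ℕ}

/-- The first `m` of the `n / 2` blocks of `wordD n`. -/
def wordBlocks (n m : ℕ) : List ℕ :=
  ((List.range m).map fun m =>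
    n :: (decRun (n - 2) (2 * m + 1) ++ decRun (n - 1) (2 * m + 2))).flatten

theorem wordBlocks_succ (n m : ℕ) : wordBlocks n (m + 1) =
    wordBlocks n m ++ n :: (decRun (n - 2) (2 * m + 1) ++ decRun (n - 1) (2 * m + 2)) := by
  rw [wordBlocks, List.range_succ, List.map_append, List.flatten_append, List.map_singleton,
    List.flatten_singleton, wordBlocks]

theorem length_wordBlocks_add (hm : 2 * m ≤ n) :
    (wordBlocks n m).length + m * (2 * m + 1) = 2 * n * m := by
  induction m with
  | zero => rfl
  | succ m ih =>
    have hlength : (n :: (decRun (n - 2) (2 * m + 1) ++ decRun (n - 1) (2 * m + 2))).length +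
        (4 * m + 3) = 2 * n := by
      simp only [List.length_cons, List.length_append, decRun, List.length_reverse,
        List.length_range']
      omega
    rw [wordBlocks_succ, List.length_append]
    linarith [ih (by omega)]

theorem length_wordD (n : ℕ) : (wordD n).length = Npar n := by
  have hlength : (wordD n).length + n / 2 * (2 * (n / 2) + 1) = 2 * n * (n / 2) :=
    length_wordBlocks_add (Nat.mul_div_le n 2)
  refine (Nat.div_eq_of_eq_mul_right two_pos ?_).symm
  obtain ⟨k, rfl | rfl⟩ := n.even_or_odd'
  · rw [Nat.mul_div_cancel_left k two_pos] at hlength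
    rw [Nat.mul_sub_one]
    refine Nat.sub_eq_of_eq_add ?_
    linarith
  · rw [show (2 * k + 1) / 2 = k by omega] at hlength
    rw [Nat.add_sub_cancel]
    linarith

theorem exists_isPositiveFactor_isRepresentedBy (hm : 2 * m ≤ n) {ops : List (ℕ × ℝ)}
    (hops : ops.map Prod.fst = wordBlocks n m) (hpos : ∀ op ∈ ops, 0 < op.2) :
    ∃ Q, IsPositiveFactor n m Q ∧
      IsRepresentedBy (ops.map fun op => xMat n op.1 op.2).prod m Q := by
  induction m generalizing ops with
  | zero =>
    obtain rfl : ops = [] := List.map_eq_nil_iff.1 hops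
    exact ⟨0, isPositiveFactor_zero n, IsRepresentedBy.one 0⟩
  | succ m ih =>
    rw [wordBlocks_succ, List.map_eq_append_iff] at hops
    obtain ⟨ops₀, block, rfl, hops₀, hblock⟩ := hops
    obtain ⟨⟨_, t⟩, runs, rfl, rfl, hruns⟩ := List.map_eq_cons_iff.1 hblock
    obtain ⟨ops₁, ops₂, rfl, hops₁, hops₂⟩ := List.map_eq_append_iff.1 hruns
    simp only [List.forall_mem_append, List.forall_mem_cons] at hpos
    obtain ⟨hpos₀, ht, hpos₁, hpos₂⟩ := hpos
    obtain ⟨Q, hQ, hrep⟩ := ih (by omega) hops₀ hpos₀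
    refine ⟨_, hQ.block hm ht hops₁ hpos₁ hops₂ hpos₂, ?_⟩
    simp only [List.map_append, List.map_cons, List.prod_append, List.prod_cons, ← Matrix.mul_assoc]
    refine ((hrep.mul_xMat_self (by omega) t).mul_prod_xMat fun op hop => ?_).mul_prod_xMat
      fun op hop => ?_
    · obtain ⟨hge, hle⟩ := fst_mem_Icc_of_map_fst_eq_decRun hops₁ hop
      omega
    · obtain ⟨hge, hle⟩ := fst_mem_Icc_of_map_fst_eq_decRun hops₂ hop
      omega

theorem exists_isPositiveFactor_Amat {t : ℕ → ℝ} (ht : ∀ i < Npar n, 0 < t i) :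
    ∃ Q, IsPositiveFactor n (n / 2) Q ∧ Amat n t = skewGram (n / 2) (alternateSigns n Q) := by
  set ops := (List.range (Npar n)).map fun l => ((wordD n).getD l 0, t l) with hops
  have hfst : ops.map Prod.fst = wordD n := by
    refine List.ext_getElem (by simp [ops, length_wordD]) fun l _ hl => ?_
    simp [ops, hl]
  have hpos : ∀ op ∈ ops, 0 < op.2 := by simpa [ops] using ht
  obtain ⟨Q, hQ, hrep⟩ := exists_isPositiveFactor_isRepresentedBy (Nat.mul_div_le n 2) hfst hpos
  rw [hops, List.map_map] at hrep
  exact ⟨Q, hQ, hrep.inv_mul_eq⟩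

end Word

section Minors

theorem IsPositiveFactor.det_leading_pos {R : Type*} [CommRing R] [LinearOrder R]
    [IsStrictOrderedRing R] {n m c : ℕ} {Q : Matrix ℕ ℕ R} (h : IsPositiveFactor n m Q)
    (hm : 2 * m ≤ n) (hc : c ≤ 2 * m) :
    0 < (Q.submatrix (Fin.val : Fin c → ℕ) (Fin.val : Fin c → ℕ)).det := by
  have hdet : ∀ d ≤ 2 * m, (Q.submatrix (Fin.val : Fin d → ℕ) (Fin.val : Fin d → ℕ)).det =
      ∏ i : Fin d, Q i i := fun d hd =>
    det_of_isLowerTriangular _ fun i j hij => h.lower j (by omega) i hij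
  have hprod : ∏ i : Fin (2 * m), Q i i ≠ 0 := by
    rw [← hdet _ le_rfl, ← partnerCols_two_mul m]
    refine (h.minorsPos _ le_rfl _ ?_ (fun p => ?_) fun p => le_rfl).ne'
    · rw [partnerCols_two_mul]
      exact Fin.val_strictMono
    · rw [partnerCols_two_mul]
      omega
  rw [hdet c hc]
  refine Finset.prod_pos fun i _ => (h.nonneg i i).lt_of_ne' ?_
  exact Finset.prod_ne_zero_iff.1 hprod ⟨i, by omega⟩ (Finset.mem_univ _)

theorem det_alternateSigns_submatrix {R ι : Type*} [CommRing R] [Fintype ι] [DecidableEq ι] {n : ℕ}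
    (Q : Matrix ℕ ℕ R) (r : ι → Fin n) (σ : ι → ℕ) :
    ((alternateSigns n Q).submatrix r σ).det =
      (∏ p, (-1) ^ (r p : ℕ)) * (Q.submatrix (fun p => (r p : ℕ)) σ).det :=
  det_mul_column (fun p => (-1) ^ (r p : ℕ)) (Q.submatrix (fun p => (r p : ℕ)) σ)

variable {n j k : ℕ}

/-- The increasing enumeration of the rows of the minor `Mminor n j k`, counted from `0`. -/
def minorRows (n j k : ℕ) (p : Fin (n - j)) : Fin n :=
  if (p : ℕ) < n - k - 1 then ⟨p, by omega⟩ else ⟨p + j, by omega⟩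

theorem val_minorRows (n j k : ℕ) (p : Fin (n - j)) :
    (minorRows n j k p : ℕ) = if (p : ℕ) < n - k - 1 then (p : ℕ) else p + j :=
  apply_ite Fin.val _ _ _

theorem minorRows_strictMono (n j k : ℕ) : StrictMono fun p => (minorRows n j k p : ℕ) := by
  intro p q hpq
  have hpq : (p : ℕ) < q := hpq
  simp only [val_minorRows]
  split_ifs <;> omega

theorem partnerCols_le_minorRows (hj : 1 ≤ j) (hjk : j ≤ k) (p : Fin (n - j)) :
    partnerCols (n - j) p ≤ minorRows n j k p := by
  rw [partnerCols, val_minorRows]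
  split_ifs <;> omega

theorem Mminor_eq_det_submatrix (n j k : ℕ) (A : Matrix (Fin n) (Fin n) ℝ) :
    Mminor n j k A =
      (-1) ^ (j * k) * (A.submatrix (minorRows n j k) (Fin.castLE (Nat.sub_le n j))).det :=
  rfl

theorem neg_one_pow_mul_prod_minorRows {R : Type*} [CommRing R] (hjk : j ≤ k) (hk : k < n) :
    (-1 : R) ^ (j * k) *
      ((∏ p, (-1) ^ (minorRows n j k p : ℕ)) * ∏ p : Fin (n - j), (-1) ^ (p : ℕ)) = 1 := by
  have hfactor : ∀ p : Fin (n - j), (-1 : R) ^ (minorRows n j k p : ℕ) * (-1) ^ (p : ℕ) =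
      if (p : ℕ) < n - k - 1 then 1 else (-1) ^ j := by
    intro p
    rw [val_minorRows]
    split_ifs
    · rw [← mul_pow, neg_one_mul, neg_neg, one_pow]
    · rw [pow_add, mul_right_comm, ← mul_pow, neg_one_mul, neg_neg, one_pow, one_mul]
  obtain ⟨e, rfl⟩ := Nat.exists_eq_add_of_le hjk
  have hcard : n - j = n - (j + e) - 1 + (e + 1) := by omega
  have hparity : j * (j + e) + j * (e + 1) = j * (j + 1) + 2 * (j * e) := by ring
  rw [← Finset.prod_mul_distrib, Finset.prod_congr rfl fun p _ => hfactor p,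
    Fin.prod_univ_eq_prod_range (fun p => if p < n - (j + e) - 1 then (1 : R) else (-1) ^ j),
    hcard, Finset.prod_range_add,
    Finset.prod_eq_one fun p hp => if_pos (Finset.mem_range.1 hp)]
  simp only [add_lt_iff_neg_left, not_lt_zero, if_false, Finset.prod_const, Finset.card_range,
    one_mul]
  rw [← pow_mul, ← pow_add, hparity]
  exact ((Nat.even_mul_succ_self j).add (even_two_mul _)).neg_one_pow

theorem Mminor_skewGram_alternateSigns {M : ℕ} {Q : Matrix ℕ ℕ ℝ} (hjk : j ≤ k) (hk : k < n)
    (hM : n - j ≤ 2 * M) (hQ : ∀ b < 2 * M, ∀ a < b, Q a b = 0) :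
    Mminor n j k (skewGram M (alternateSigns n Q)) =
      (Q.submatrix (fun p => (minorRows n j k p : ℕ)) (partnerCols (n - j))).det *
        (Q.submatrix (Fin.val : Fin (n - j) → ℕ) (Fin.val : Fin (n - j) → ℕ)).det := by
  have hlower : ∀ (p : Fin (n - j)) (y : ℕ), n - j ≤ y → y < 2 * M →
      alternateSigns n Q (Fin.castLE (Nat.sub_le n j) p) y = 0 := fun p y hy hyM => by
    rw [alternateSigns, of_apply, Fin.val_castLE, hQ y hyM p (by omega), mul_zero]
  rw [Mminor_eq_det_submatrix, det_skewGram_submatrix hM _ hlower, det_alternateSigns_submatrix,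
    det_alternateSigns_submatrix]
  simp only [Fin.val_castLE]
  linear_combination (Q.submatrix (fun p => (minorRows n j k p : ℕ)) (partnerCols (n - j))).det *
    (Q.submatrix (Fin.val : Fin (n - j) → ℕ) (Fin.val : Fin (n - j) → ℕ)).det *
      neg_one_pow_mul_prod_minorRows (R := ℝ) hjk hk

end Minors

/-- If the parameters `t_1, …, t_N` are positive then all the minors
`M_{j,k}(A(t))` are positive. -/
theorem Mminor_pos_of_params_pos (n : ℕ) (hn : 2 ≤ n)
    (t : ℕ → ℝ) (ht : ∀ i < Npar n, 0 < t i) :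
    ∀ j k : ℕ, 1 ≤ j → j ≤ k → k ≤ n - 1 → 0 < Mminor n j k (Amat n t) := by
  intro j k hj hjk hk
  obtain ⟨Q, hQ, hA⟩ := exists_isPositiveFactor_Amat ht
  have hc : n - j ≤ 2 * (n / 2) := by omega
  rw [hA, Mminor_skewGram_alternateSigns hjk (by omega) hc hQ.lower]
  refine mul_pos ?_ (hQ.det_leading_pos (Nat.mul_div_le n 2) hc)
  exact hQ.minorsPos _ hc _ (minorRows_strictMono n j k) (fun p => (minorRows n j k p).isLt)
    (partnerCols_le_minorRows hj hjk)
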